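/- For every n ≥ 0 and all simplicial complexes 𝒦₁, 𝒦₂ over S, the n-skeletons satisfy d(πₙ(𝒦₁), πₙ(𝒦₂)) ≤ d(𝒦₁, 𝒦₂); that is, the n-skeleton map πₙ is 1-Lipschitz for the distance d. -/

import Mathlib

open scoped BigOperators

/-- A simplicial complex over the vertex set `S`: a nonempty collection of
nonempty finite subsets of `S`, closed under taking nonempty subsets. -/
def IsSimplicialComplex {S : Type*} (K : Set (Finset S)) : Prop :=
  K.Nonempty ∧ (∀ F ∈ K, F.Nonempty) ∧
    ∀ F ∈ K, ∀ G : Finset S, G.Nonempty → G ⊆ F → G ∈ K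

/-- Halved ℓ¹ distance between finitely supported real functions:
`d(α,β) = (1/2) ∑ₛ |α s - β s|`. -/
noncomputable def l1dist {S : Type*} (α β : S →₀ ℝ) : ℝ :=
  (1 / 2) * (α - β).sum fun _ x => |x|

/-- The ℓ¹ geometric realization of a collection `K` of finite subsets of `S`:
finitely supported probability vectors whose support is a face of `K`. -/
def realization {S : Type*} (K : Set (Finset S)) : Set (S →₀ ℝ) :=
  {α | (∀ s, 0 ≤ α s) ∧ (α.sum fun _ x => x) = 1 ∧ α.support ∈ K}

/-- Distance from a point to a set of finitely supported functions. -/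
noncomputable def distToSet {S : Type*} (α : S →₀ ℝ) (X : Set (S →₀ ℝ)) : ℝ :=
  sInf (l1dist α '' X)

/-- One-sided Hausdorff distance between (the realizations of) two complexes. -/
noncomputable def hdelta {S : Type*} (K₁ K₂ : Set (Finset S)) : ℝ :=
  sSup ((fun α => distToSet α (realization K₂)) '' realization K₁)

/-- Hausdorff distance between (the realizations of) two simplicial complexes. -/
noncomputable def hdist {S : Type*} (K₁ K₂ : Set (Finset S)) : ℝ :=
  max (hdelta K₁ K₂) (hdelta K₂ K₁)

/-- `d(F, K)`: supremum of distances to `|K|₁` over probability vectors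
supported exactly on `F`. -/
noncomputable def dFace {S : Type*} (F : Finset S) (K : Set (Finset S)) : ℝ :=
  sSup ((fun α => distToSet α (realization K)) ''
    {α : S →₀ ℝ | (∀ s, 0 ≤ α s) ∧ (α.sum fun _ x => x) = 1 ∧ α.support = F})

/-- The `n`-skeleton of a simplicial complex. -/
def skeleton {S : Type*} (n : ℕ) (K : Set (Finset S)) : Set (Finset S) :=
  {F | F ∈ K ∧ F.card ≤ n + 1}

/-!
Given `α` with at most `n + 1` vertices and `β ∈ |K|₁`, choose a self-map `f` of the vertex set
which fixes `supp α`, sends `supp β` into itself and has at most `n + 1` values on `supp β`.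
Pushing measures forward along `f` fixes `α`, does not increase the ℓ¹ distance and moves `β` into
the `n`-skeleton of `K`. Hence `α` is as far from the `n`-skeleton as it is from `K`.
-/

section Finsupp

variable {S T : Type*}

theorem support_mapDomain_of_nonneg {M : Type*} [AddCommMonoid M] [PartialOrder M]
    [IsOrderedAddMonoid M] [DecidableEq T] (f : S → T) {ξ : S →₀ M} (hξ : 0 ≤ ξ) :
    (ξ.mapDomain f).support = ξ.support.image f := by
  refine Finsupp.mapDomain_support.antisymm (Finset.image_subset_iff.2 fun s hs ↦ ?_)
  rw [Finsupp.mem_support_iff, Finsupp.mapDomain_apply_eq_sum]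
  intro hzero
  have hvanish := (Finset.sum_eq_zero_iff_of_nonneg fun i _ ↦ hξ i).1 hzero
  exact Finsupp.mem_support_iff.1 hs (hvanish s (Finset.mem_filter.2 ⟨hs, rfl⟩))

variable {G : Type*} [AddCommGroup G] [LinearOrder G] [IsOrderedAddMonoid G]

theorem sum_abs_add_le (ξ η : S →₀ G) :
    ((ξ + η).sum fun _ x ↦ |x|) ≤ (ξ.sum fun _ x ↦ |x|) + η.sum fun _ x ↦ |x| := by
  classical
  rw [Finsupp.sum_of_support_subset _ Finsupp.support_add _ (by simp),
    Finsupp.sum_of_support_subset ξ Finset.subset_union_left _ (by simp),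
    Finsupp.sum_of_support_subset η Finset.subset_union_right _ (by simp),
    ← Finset.sum_add_distrib]
  exact Finset.sum_le_sum fun s _ ↦ abs_add_le (ξ s) (η s)

theorem sum_abs_mapDomain_le (f : S → T) (ξ : S →₀ G) :
    ((ξ.mapDomain f).sum fun _ x ↦ |x|) ≤ ξ.sum fun _ x ↦ |x| :=
  calc ((ξ.mapDomain f).sum fun _ x ↦ |x|)
      ≤ ξ.sum fun s x ↦ (Finsupp.single (f s) x).sum fun _ y ↦ |y| :=
        Finset.le_sum_of_subadditive (fun η : T →₀ G ↦ η.sum fun _ x ↦ |x|)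
          Finsupp.sum_zero_index.le sum_abs_add_le _ _
    _ = ξ.sum fun _ x ↦ |x| :=
        Finsupp.sum_congr fun _ _ ↦ Finsupp.sum_single_index abs_zero

end Finsupp

section L1Dist

variable {S T : Type*}

theorem l1dist_nonneg (α β : S →₀ ℝ) : 0 ≤ l1dist α β :=
  mul_nonneg (by norm_num) (Finsupp.sum_nonneg fun _ _ ↦ abs_nonneg _)

theorem l1dist_mapDomain_le (f : S → T) (α β : S →₀ ℝ) :
    l1dist (α.mapDomain f) (β.mapDomain f) ≤ l1dist α β := by
  unfold l1dist
  rw [← Finsupp.mapDomain_sub]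
  gcongr
  exact sum_abs_mapDomain_le f (α - β)

theorem distToSet_le {α β : S →₀ ℝ} {X : Set (S →₀ ℝ)} (hβ : β ∈ X) :
    distToSet α X ≤ l1dist α β :=
  csInf_le ⟨0, Set.forall_mem_image.2 fun γ _ ↦ l1dist_nonneg α γ⟩ (Set.mem_image_of_mem _ hβ)

theorem le_distToSet {α : S →₀ ℝ} {X : Set (S →₀ ℝ)} (hX : X.Nonempty) {r : ℝ}
    (h : ∀ β ∈ X, r ≤ l1dist α β) : r ≤ distToSet α X :=
  le_csInf (hX.image _) (Set.forall_mem_image.2 h)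

end L1Dist

section Realization

variable {S T : Type*}

theorem realization_mono {K L : Set (Finset S)} (h : K ⊆ L) : realization K ⊆ realization L :=
  fun _ ⟨hnonneg, hsum, hsupp⟩ ↦ ⟨hnonneg, hsum, h hsupp⟩

theorem mapDomain_mem_realization [DecidableEq T] {K : Set (Finset S)} {L : Set (Finset T)}
    {α : S →₀ ℝ} (hα : α ∈ realization K) {f : S → T} (hf : α.support.image f ∈ L) :
    α.mapDomain f ∈ realization L := by
  obtain ⟨hnonneg, hsum, -⟩ := hα
  refine ⟨Finsupp.mapDomain_nonneg hnonneg, ?_, ?_⟩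
  · rw [Finsupp.sum_mapDomain_index (fun _ ↦ rfl) (fun _ _ _ ↦ rfl), hsum]
  · rwa [support_mapDomain_of_nonneg f hnonneg]

theorem sum_abs_of_mem_realization {K : Set (Finset S)} {α : S →₀ ℝ} (hα : α ∈ realization K) :
    (α.sum fun _ x ↦ |x|) = 1 := by
  obtain ⟨hnonneg, hsum, -⟩ := hα
  exact (Finsupp.sum_congr fun s _ ↦ abs_of_nonneg (hnonneg s)).trans hsum

theorem l1dist_le_one {K L : Set (Finset S)} {α β : S →₀ ℝ} (hα : α ∈ realization K)
    (hβ : β ∈ realization L) : l1dist α β ≤ 1 := by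
  have hneg : ((-β).sum fun _ x ↦ |x|) = β.sum fun _ x ↦ |x| := by
    simp only [Finsupp.sum_neg_index, abs_zero, abs_neg, implies_true]
  have hadd := sum_abs_add_le α (-β)
  rw [hneg, sum_abs_of_mem_realization hα, sum_abs_of_mem_realization hβ,
    ← sub_eq_add_neg] at hadd
  unfold l1dist
  linarith

theorem hdelta_mono_left {K₁ K₂ L : Set (Finset S)} (hK₁ : (realization K₁).Nonempty)
    (hL : (realization L).Nonempty) (h : K₁ ⊆ K₂) : hdelta K₁ L ≤ hdelta K₂ L := by
  obtain ⟨β, hβ⟩ := hL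
  refine csSup_le_csSup ⟨1, Set.forall_mem_image.2 fun α hα ↦ ?_⟩ (hK₁.image _)
    (Set.image_mono (realization_mono h))
  exact (distToSet_le hβ).trans (l1dist_le_one hα hβ)

theorem IsSimplicialComplex.exists_singleton_mem {K : Set (Finset S)}
    (hK : IsSimplicialComplex K) : ∃ v, {v} ∈ K := by
  obtain ⟨⟨F, hF⟩, hne, hsub⟩ := hK
  obtain ⟨v, hv⟩ := hne F hF
  exact ⟨v, hsub F hF {v} (Finset.singleton_nonempty v) (Finset.singleton_subset_iff.2 hv)⟩

theorem IsSimplicialComplex.realization_nonempty {K : Set (Finset S)}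
    (hK : IsSimplicialComplex K) : (realization K).Nonempty := by
  obtain ⟨v, hv⟩ := hK.exists_singleton_mem
  refine ⟨Finsupp.single v 1, Finsupp.single_nonneg.2 zero_le_one,
    Finsupp.sum_single_index rfl, ?_⟩
  rwa [Finsupp.support_single v one_ne_zero]

end Realization

section Skeleton

variable {S : Type*}

theorem skeleton_subset (n : ℕ) (K : Set (Finset S)) : skeleton n K ⊆ K :=
  fun _ hF ↦ hF.1

theorem IsSimplicialComplex.skeleton {K : Set (Finset S)} (hK : IsSimplicialComplex K) (n : ℕ) :
    IsSimplicialComplex (skeleton n K) := by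
  obtain ⟨v, hv⟩ := hK.exists_singleton_mem
  obtain ⟨-, hne, hsub⟩ := hK
  have hcard : ({v} : Finset S).card ≤ n + 1 := by
    simp only [Finset.card_singleton, le_add_iff_nonneg_left, zero_le]
  exact ⟨⟨{v}, hv, hcard⟩, fun F hF ↦ hne F hF.1, fun F hF G hG hGF ↦
    ⟨hsub F hF.1 G hG hGF, (Finset.card_le_card hGF).trans hF.2⟩⟩

theorem exists_map_fixing_card_image_le [DecidableEq S] (F : Finset S) {G : Finset S}
    (hG : G.Nonempty) : ∃ f : S → S, (∀ s ∈ F, f s = s) ∧ G.image f ⊆ G ∧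
      (G.image f).card ≤ max F.card 1 := by
  by_cases hFG : Disjoint F G
  · obtain ⟨v, hv⟩ := hG
    have himage : G.image (fun s ↦ if s ∈ F then s else v) ⊆ {v} := by
      grind [Finset.disjoint_left]
    exact ⟨fun s ↦ if s ∈ F then s else v, fun s hs ↦ if_pos hs,
      himage.trans (Finset.singleton_subset_iff.2 hv),
      (Finset.card_le_card himage).trans (le_max_right _ _)⟩
  · obtain ⟨v, hvF, hvG⟩ := Finset.not_disjoint_iff.1 hFG
    have himage : G.image (fun s ↦ if s ∈ F then s else v) ⊆ F ∩ G := by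
      grind
    exact ⟨fun s ↦ if s ∈ F then s else v, fun s hs ↦ if_pos hs,
      himage.trans Finset.inter_subset_right,
      (Finset.card_le_card (himage.trans Finset.inter_subset_left)).trans (le_max_left _ _)⟩

theorem exists_mem_realization_skeleton_l1dist_le {K : Set (Finset S)}
    (hK : IsSimplicialComplex K) {n : ℕ} {α β : S →₀ ℝ} (hα : α.support.card ≤ n + 1)
    (hβ : β ∈ realization K) : ∃ γ ∈ realization (skeleton n K), l1dist α γ ≤ l1dist α β := by
  classical
  obtain ⟨-, hne, hsub⟩ := hK
  have hβne : β.support.Nonempty := hne _ hβ.2.2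
  obtain ⟨f, hfix, himage, hcard⟩ := exists_map_fixing_card_image_le α.support hβne
  have hface : β.support.image f ∈ skeleton n K :=
    ⟨hsub _ hβ.2.2 _ (hβne.image f) himage, hcard.trans (max_le hα n.succ_pos)⟩
  refine ⟨β.mapDomain f, mapDomain_mem_realization hβ hface, ?_⟩
  have hαfix : α.mapDomain f = α := (Finsupp.mapDomain_congr hfix).trans Finsupp.mapDomain_id
  simpa only [hαfix] using l1dist_mapDomain_le f α β

theorem distToSet_realization_skeleton {K : Set (Finset S)} (hK : IsSimplicialComplex K) {n : ℕ}
    {α : S →₀ ℝ} (hα : α.support.card ≤ n + 1) :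
    distToSet α (realization (skeleton n K)) = distToSet α (realization K) := by
  apply le_antisymm
  · refine le_distToSet hK.realization_nonempty fun β hβ ↦ ?_
    obtain ⟨γ, hγ, hle⟩ := exists_mem_realization_skeleton_l1dist_le hK hα hβ
    exact (distToSet_le hγ).trans hle
  · exact le_distToSet (hK.skeleton n).realization_nonempty fun β hβ ↦
      distToSet_le (realization_mono (skeleton_subset n K) hβ)

theorem hdelta_skeleton_skeleton (n : ℕ) (K₁ : Set (Finset S)) {K₂ : Set (Finset S)}
    (hK₂ : IsSimplicialComplex K₂) :
    hdelta (skeleton n K₁) (skeleton n K₂) = hdelta (skeleton n K₁) K₂ :=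
  congrArg sSup (Set.image_congr fun _ hα ↦ distToSet_realization_skeleton hK₂ hα.2.2.2)

theorem hdelta_skeleton_le (n : ℕ) {K₁ K₂ : Set (Finset S)} (hK₁ : IsSimplicialComplex K₁)
    (hK₂ : IsSimplicialComplex K₂) :
    hdelta (skeleton n K₁) (skeleton n K₂) ≤ hdelta K₁ K₂ :=
  (hdelta_skeleton_skeleton n K₁ hK₂).trans_le <|
    hdelta_mono_left (hK₁.skeleton n).realization_nonempty hK₂.realization_nonempty
      (skeleton_subset n K₁)

end Skeleton

/-- The `n`-skeleton map is 1-Lipschitz for the Hausdorff distance. -/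
theorem stmt4 {S : Type*} (n : ℕ) (K₁ K₂ : Set (Finset S))
    (h1 : IsSimplicialComplex K₁) (h2 : IsSimplicialComplex K₂) :
    hdist (skeleton n K₁) (skeleton n K₂) ≤ hdist K₁ K₂ :=
  max_le_max (hdelta_skeleton_le n h1 h2) (hdelta_skeleton_le n h2 h1)
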